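/- Let d ≥ 3 and let A₁ ⊆ A₂ ⊊ T with A₁ nonempty. Define g(x) = P_x[H_{A₁} ≤ T_{A₂}] and f_{A₁}(x) = 1 − E_x[H_{A₁}]/E[H_{A₁}] for x ∈ T. Then D(g,g)·(1 − 2 sup_{x ∈ T∖A₂} |f_{A₁}(x)|) ≤ 1/E[H_{A₁}] ≤ D(g,g)/π(T∖A₂)², where π is the uniform probability measure on T and E denotes expectation for the walk started from π. -/

import Mathlib

open MeasureTheory Filter Classical
open scoped ENNReal NNReal

noncomputable section

namespace Frag

/-! ### Graph-theoretic basics -/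

/-- Two vertices of `Fin d → R` are adjacent if they differ in exactly one
coordinate, by `±1` (Euclidean distance one). -/
def adj {d : ℕ} {R : Type*} [AddGroupWithOne R] (x y : Fin d → R) : Prop :=
  x ≠ y ∧ ∃ i : Fin d, (y i = x i + 1 ∨ x i = y i + 1) ∧ ∀ j : Fin d, j ≠ i → x j = y j

/-- The discrete torus `(ℤ/Nℤ)^d`. -/
abbrev Torus (d N : ℕ) := Fin d → ZMod N

/-- The lattice `ℤ^d`. -/
abbrev Lat (d : ℕ) := Fin d → ℤ

instance (n : ℕ) : MeasurableSpace (ZMod n) := ⊤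

/-- The `ℓ∞`-distance on the torus. -/
def torusDist {d N : ℕ} (x y : Torus d N) : ℕ :=
  Finset.univ.sup fun i : Fin d => min (x i - y i).val (y i - x i).val

/-- The `ℓ∞`-distance on the lattice. -/
def latDist {d : ℕ} (x y : Lat d) : ℕ :=
  Finset.univ.sup fun i : Fin d => (x i - y i).natAbs

/-- Closed `ℓ∞`-ball in the torus. -/
def torusBall {d N : ℕ} (x : Torus d N) (r : ℝ) : Set (Torus d N) :=
  {y | (torusDist x y : ℝ) ≤ r}

/-- Closed `ℓ∞`-ball in the lattice. -/
def latBall {d : ℕ} (x : Lat d) (r : ℝ) : Set (Lat d) :=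
  {y | (latDist x y : ℝ) ≤ r}

/-- `x` and `y` are connected by a nearest-neighbour path staying in `S`. -/
def connectedIn {α : Type*} (rel : α → α → Prop) (S : Set α) (x y : α) : Prop :=
  ∃ (n : ℕ) (p : ℕ → α), p 0 = x ∧ p n = y ∧ (∀ k, k ≤ n → p k ∈ S) ∧
    ∀ k, k < n → rel (p k) (p (k + 1))

/-- The connected component of `x` inside `S`. -/
def compOf {α : Type*} (rel : α → α → Prop) (S : Set α) (x : α) : Set α :=
  {y | connectedIn rel S x y}

/-- `S` is a connected set. -/
def IsConnSet {α : Type*} (rel : α → α → Prop) (S : Set α) : Prop :=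
  ∀ x ∈ S, ∀ y ∈ S, connectedIn rel S x y

/-- External vertex boundary. -/
def extBdry {α : Type*} (rel : α → α → Prop) (S : Set α) : Set α :=
  {y | y ∉ S ∧ ∃ x ∈ S, rel x y}

/-- Internal vertex boundary. -/
def intBdry {α : Type*} (rel : α → α → Prop) (S : Set α) : Set α :=
  {x | x ∈ S ∧ ∃ y, y ∉ S ∧ rel x y}

/-- The cardinality of the largest connected component of `S`. -/
def maxCompSize {α : Type*} (rel : α → α → Prop) (S : Set α) : ℕ :=
  sSup {n | ∃ x ∈ S, n = (compOf rel S x).ncard}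

/-- The diameter of a set with respect to a distance. -/
def diamOf {α : Type*} (dist : α → α → ℕ) (S : Set α) : ℕ :=
  sSup {n | ∃ x ∈ S, ∃ y ∈ S, n = dist x y}

/-- The canonical graph isomorphism `φ` from `B(0, N/4) ⊆ (ℤ/Nℤ)^d` onto
`B(0, N/4) ⊆ ℤ^d`, given by the signed representative of each coordinate. -/
def torusToLat {d N : ℕ} (x : Torus d N) : Lat d :=
  fun i => if ((x i).val : ℝ) ≤ (N : ℝ) / 2 then ((x i).val : ℤ) else ((x i).val : ℤ) - (N : ℤ)

/-! ### Discrete-time simple random walk -/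

/-- One-step transition probability of the simple random walk. -/
def srwStep {d : ℕ} {R : Type*} [AddGroupWithOne R] (x y : Fin d → R) : ℝ≥0∞ :=
  if adj x y then ((2 * d : ℕ) : ℝ≥0∞)⁻¹ else 0

/-- `μ` is the law on path space of the discrete-time simple random walk with
initial distribution `init`, characterized by its cylinder probabilities. -/
def IsWalkLaw {d : ℕ} {R : Type*} [AddGroupWithOne R] [MeasurableSpace R]
    (μ : Measure (ℕ → (Fin d → R))) (init : (Fin d → R) → ℝ≥0∞) : Prop :=
  IsProbabilityMeasure μ ∧
  ∀ (n : ℕ) (w : ℕ → (Fin d → R)),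
    μ {ω | ∀ k, k ≤ n → ω k = w k} =
      init (w 0) * ∏ k ∈ Finset.range n, srwStep (w k) (w (k + 1))

/-- The uniform initial distribution on the torus. -/
def unifInit (d N : ℕ) : Torus d N → ℝ≥0∞ := fun _ => ((N : ℝ≥0∞) ^ d)⁻¹

/-- The initial distribution concentrated at `x`. -/
def pointInit {α : Type*} (x : α) : α → ℝ≥0∞ := fun y => if y = x then 1 else 0

/-- The set of sites visited in the first `t` steps. -/
def visited {α : Type*} (t : ℕ) (ω : ℕ → α) : Set α := {v | ∃ k, k ≤ t ∧ ω k = v}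

/-! ### Capacity and random interlacements on `ℤ^d` -/

/-- The event that the walk never returns to `V` after time `0`. -/
def escEvent {d : ℕ} (V : Set (Lat d)) : Set (ℕ → Lat d) :=
  {w | ∀ n, 1 ≤ n → w n ∉ V}

/-- `r` is the (simple random walk) capacity of `V ⊆ ℤ^d`:
`r = Σ_{x ∈ V} P_x[H̃_V = ∞]`. -/
def IsCap (d : ℕ) (V : Set (Lat d)) (r : ℝ) : Prop :=
  ∃ μ : Lat d → Measure (ℕ → Lat d),
    (∀ x, IsWalkLaw (μ x) (pointInit x)) ∧
    r = ∑ᶠ x ∈ V, ((μ x) (escEvent V)).toReal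

/-- `I` is a random interlacement at level `u` on the probability space `(Ω, P)`:
for every finite `V ⊆ ℤ^d`, `P[I ∩ V = ∅] = exp (−u · cap V)`. -/
def IsInterlacement (d : ℕ) (u : ℝ) {Ω : Type*} [MeasurableSpace Ω]
    (P : Measure Ω) (I : Ω → Set (Lat d)) : Prop :=
  IsProbabilityMeasure P ∧
  (∀ x : Lat d, MeasurableSet {ω | x ∈ I ω}) ∧
  ∀ V : Set (Lat d), V.Finite → ∀ r : ℝ, IsCap d V r →
    P {ω | ∀ x ∈ V, x ∉ I ω} = ENNReal.ofReal (Real.exp (-u * r))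

/-- `e = η(u)`, the probability that the origin lies in an infinite component of
the vacant set `V^u = ℤ^d ∖ I^u` of a random interlacement at level `u`. -/
def IsEta (d : ℕ) (u e : ℝ) : Prop :=
  ∃ (Ω : Type) (_ : MeasurableSpace Ω) (P : Measure Ω) (I : Ω → Set (Lat d)),
    IsInterlacement d u P I ∧
    e = (P {ω | (compOf adj ((I ω)ᶜ) (0 : Lat d)).Infinite}).toReal

/-- The critical level `u_* = inf {u ≥ 0 : η(u) = 0}`. -/
def uStar (d : ℕ) : ℝ := sInf {u | 0 ≤ u ∧ IsEta d u 0}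

/-- The probability of an event `E` about a random interlacement at level `u`. -/
def intProb (d : ℕ) (u : ℝ) (E : Set (Lat d) → Prop) : ℝ :=
  sSup {p | ∃ (Ω : Type) (_ : MeasurableSpace Ω) (P : Measure Ω) (I : Ω → Set (Lat d)),
    IsInterlacement d u P I ∧ p = (P {ω | E (I ω)}).toReal}

/-- The event that `B(0,L)` is connected to the external boundary of `B(0,2L)`
by a nearest-neighbour path in `S`. -/
def connAcross (d L : ℕ) (S : Set (Lat d)) : Prop :=
  ∃ x ∈ latBall (0 : Lat d) (L : ℝ), ∃ y ∈ extBdry adj (latBall (0 : Lat d) (2 * (L : ℝ))),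
    connectedIn adj S x y

/-- The critical level `u_** = inf {u ≥ 0 : α(u) > 0}`. -/
def uStarStar (d : ℕ) : ℝ :=
  sInf {u | 0 ≤ u ∧ ∃ a : ℝ, 0 < a ∧
    Tendsto (fun L : ℕ => (L : ℝ) ^ a * intProb d u fun I => connAcross d L Iᶜ)
      atTop (nhds 0)}

/-- `u` is a strongly supercritical level for random interlacements on `ℤ^d`. -/
def StronglySupercritical (d : ℕ) (u : ℝ) : Prop :=
  ∃ μ : ℝ, 0 < μ ∧
  ∃ (Ω : Type) (_ : MeasurableSpace Ω) (P : Measure Ω) (I : ℝ → Ω → Set (Lat d)),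
    (∀ v : ℝ, 0 ≤ v → IsInterlacement d v P (I v)) ∧
    (∀ v v' : ℝ, v ≤ v' → ∀ ω, I v ω ⊆ I v' ω) ∧
    ∃ N₀ : ℕ, ∀ N : ℕ, N₀ ≤ N →
      (1 - Real.exp (-(N : ℝ) ^ μ) ≤
        (P {ω | ∃ x ∈ latBall (0 : Lat d) (N : ℝ),
          (compOf adj ((I (u * (1 + μ)) ω)ᶜ) x).Infinite}).toReal) ∧
      (1 - Real.exp (-(N : ℝ) ^ μ) ≤
        (P {ω | ∀ S₁ S₂ : Set (Lat d),
            S₁ ⊆ (I (u * (1 - μ)) ω)ᶜ ∩ latBall 0 (N : ℝ) →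
            S₂ ⊆ (I (u * (1 - μ)) ω)ᶜ ∩ latBall 0 (N : ℝ) →
            IsConnSet adj S₁ → IsConnSet adj S₂ →
            (N : ℝ) / 8 ≤ (diamOf latDist S₁ : ℝ) →
            (N : ℝ) / 8 ≤ (diamOf latDist S₂ : ℝ) →
            ∃ x ∈ S₁, ∃ y ∈ S₂,
              connectedIn adj ((I (u * (1 + μ)) ω)ᶜ ∩ latBall 0 (2 * (N : ℝ))) x y}).toReal)

/-! ### Continuous-time walk -/

/-- Sample space for the continuous-time walk: a discrete path together with
the i.i.d. exponential interarrival gaps of the driving Poisson process. -/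
abbrev CTPath (d N : ℕ) := (ℕ → Torus d N) × (ℕ → ℝ)

/-- The number of jumps performed up to time `t`. -/
def nJumps (g : ℕ → ℝ) (t : ℝ) : ℕ := sSup {n | ∑ k ∈ Finset.range n, g k ≤ t}

/-- The position of the continuous-time walk at time `t`. -/
def ctPos {d N : ℕ} (ω : CTPath d N) (t : ℝ) : Torus d N := ω.1 (nJumps ω.2 t)

/-- `ν` is the law of an i.i.d. sequence of exponential random variables of
parameter `1`, characterized by its joint survival function. -/
def IsIIDExp (ν : Measure (ℕ → ℝ)) : Prop :=
  IsProbabilityMeasure ν ∧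
  ∀ (n : ℕ) (s : ℕ → ℝ), (∀ k, 0 ≤ s k) →
    ν {g | ∀ k, k ≤ n → s k < g k} =
      ENNReal.ofReal (Real.exp (-(∑ k ∈ Finset.range (n + 1), s k)))

/-- `P` is the law of the continuous-time simple random walk `Y_t = X_{N_t}`
with initial distribution `init`. -/
def IsCTWalk {d N : ℕ} (P : Measure (CTPath d N)) (init : Torus d N → ℝ≥0∞) : Prop :=
  ∃ (μ : Measure (ℕ → Torus d N)) (ν : Measure (ℕ → ℝ)),
    IsWalkLaw μ init ∧ IsIIDExp ν ∧ P = μ.prod ν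

/-- The entrance time `H_V = inf {t ≥ 0 : Y_t ∈ V}`. -/
def hitT {d N : ℕ} (V : Set (Torus d N)) (ω : CTPath d N) : ℝ :=
  sInf {t | 0 ≤ t ∧ ctPos ω t ∈ V}

/-- The entrance time to `V` after time `s`. -/
def hitTAfter {d N : ℕ} (V : Set (Torus d N)) (ω : CTPath d N) (s : ℝ) : ℝ :=
  sInf {t | s ≤ t ∧ ctPos ω t ∈ V}

/-- The exit time `T_V = inf {t ≥ 0 : Y_t ∉ V}`. -/
def exitT {d N : ℕ} (V : Set (Torus d N)) (ω : CTPath d N) : ℝ :=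
  sInf {t | 0 ≤ t ∧ ctPos ω t ∉ V}

/-- The regeneration time `t_* = (N log N)^2`. -/
def tstar (N : ℕ) : ℝ := ((N : ℝ) * Real.log N) ^ 2

/-- The first time `t ≥ s + t_*` such that the walk has avoided `B` during the
whole interval `[t − t_*, t]`. -/
def uEndAfter {d N : ℕ} (B : Set (Torus d N)) (ω : CTPath d N) (s : ℝ) : ℝ :=
  sInf {t | s + tstar N ≤ t ∧ ∀ r, t - tstar N ≤ r → r ≤ t → ctPos ω r ∉ B}

/-- The successive excursion times `(R_k, U_k)` between `A` and (long absences
from) `B`, with the convention `(R_0, U_0) = (0, 0)`. -/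
def excTimes {d N : ℕ} (A B : Set (Torus d N)) (ω : CTPath d N) : ℕ → ℝ × ℝ
  | 0 => (0, 0)
  | k + 1 =>
      let R := hitTAfter A ω (excTimes A B ω k).2
      (R, uEndAfter B ω R)

/-- The range of the continuous-time walk during the time interval `[a, b]`. -/
def ctRange {d N : ℕ} (ω : CTPath d N) (a b : ℝ) : Set (Torus d N) :=
  {v | ∃ t, a ≤ t ∧ t ≤ b ∧ ctPos ω t = v}

/-! ### The killed walk and the quasistationary distribution -/

/-- The action of the substochastic matrix `P^B` (walk killed on `B`) on a
vector `v`. -/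
def killedMul (d N : ℕ) (B : Set (Torus d N)) (v : Torus d N → ℝ) (x : Torus d N) : ℝ :=
  ∑ᶠ y : Torus d N, if y ∉ B ∧ adj x y then v y / (2 * d) else 0

/-- `l` is an eigenvalue of the killed transition matrix `P^B`. -/
def IsKilledEigenvalue (d N : ℕ) (B : Set (Torus d N)) (l : ℝ) : Prop :=
  ∃ v : Torus d N → ℝ, v ≠ 0 ∧ (∀ x ∈ B, v x = 0) ∧
    ∀ x, x ∉ B → killedMul d N B v x = l * v x

/-- `σ` is the quasistationary distribution on `T ∖ B`: the normalized
non-negative principal (Perron–Frobenius) eigenvector of `P^B`. -/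
def IsQSD (d N : ℕ) (B : Set (Torus d N)) (σ : Torus d N → ℝ) : Prop :=
  (∀ x, 0 ≤ σ x) ∧ (∀ x ∈ B, σ x = 0) ∧ (∑ᶠ x, σ x = 1) ∧
  ∃ l : ℝ, (∀ x, x ∉ B → killedMul d N B σ x = l * σ x) ∧
    ∀ l', IsKilledEigenvalue d N B l' → l' ≤ l

/-- The Dirichlet form of the simple random walk on the torus. -/
def dirichlet (d N : ℕ) (g : Torus d N → ℝ) : ℝ :=
  (1 / 2) * ∑ᶠ x : Torus d N, ∑ᶠ y : Torus d N,
    if adj x y then (g x - g y) ^ 2 / (2 * d * (N : ℝ) ^ d) else 0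

end Frag

namespace Frag

/-!
Let `𝓔(u, v) = ⟨u, (1 - P) v⟩` be the unnormalised Dirichlet form of the walk. The mean entrance
time `h(x) = E_x[H_A]` vanishes on `A` and satisfies `(1 - P) h = 1` off `A`, so `𝓔(u, h) = ∑ u` for
every `u` vanishing on `A`. In particular `𝓔(h, h) = ∑ h`, while `1 - g` vanishes on `A` and `1` is
orthogonal to everything, so `𝓔(g, h) = -∑ (1 - g)`, which is at most `-|Bᶜ|`. Cauchy–Schwarz gives
the upper bound on `1 / E[H_A]`.

For the lower bound let `m = E[H_A]`, the mean of `h`. If `h ≥ c` on `Bᶜ`, then `h - c (1 - g)`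
vanishes on `A` and is nonnegative on `Bᶜ`, where `(1 - P) g ≤ 0`, while `g` is harmonic in between;
hence `𝓔(h, g) ≤ -c 𝓔(g, g)`. With `c = m (1 - sup |f_A|)` the claim is
`0 ≤ 𝓔(h + m g, h + m g)`.

The equations for `h` and `g` are the Markov property at the first step. Passing to continuous time
does not change `h` because the gaps are independent of the path and have mean one.
-/

section DirichletForm

open scoped Matrix

variable {V : Type*} [Fintype V] [DecidableEq V] {P : Matrix V V ℝ} {A B : Set V}
  {h g u v : V → ℝ}

/-- The Dirichlet form `⟨u, (1 - P) v⟩` of a transition matrix `P`, taken with respect to the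
counting measure: dividing by the number of states is left to the applications. -/
def dirichletForm (P : Matrix V V ℝ) : LinearMap.BilinForm ℝ (V → ℝ) := Matrix.toBilin' (1 - P)

lemma dirichletForm_apply : dirichletForm P u v = u ⬝ᵥ (1 - P) *ᵥ v := Matrix.toBilin'_apply' _ _ _

lemma dirichletForm_isSymm (hsymm : P.IsSymm) : (dirichletForm P).IsSymm where
  eq u v := by
    rw [dirichletForm_apply, dirichletForm_apply, Matrix.dotProduct_mulVec,
      ← Matrix.mulVec_transpose, Matrix.transpose_sub, Matrix.transpose_one, hsymm.eq,
      dotProduct_comm]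

lemma dirichletForm_one_right (hP : P ∈ Matrix.rowStochastic ℝ V) : dirichletForm P u 1 = 0 := by
  rw [dirichletForm_apply, Matrix.sub_mulVec, Matrix.one_mulVec,
    Matrix.one_vecMul_of_mem_rowStochastic hP, sub_self, dotProduct_zero]

lemma dirichletForm_one_left (hP : P ∈ Matrix.rowStochastic ℝ V) (hsymm : P.IsSymm) :
    dirichletForm P 1 u = 0 := by
  rw [(dirichletForm_isSymm hsymm).eq, dirichletForm_one_right hP]

lemma dirichletForm_self (hP : P ∈ Matrix.rowStochastic ℝ V) (hsymm : P.IsSymm) :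
    dirichletForm P u u = 1 / 2 * ∑ x, ∑ y, P x y * (u x - u y) ^ 2 := by
  have row (x : V) : ∑ y, P x y = 1 := Matrix.sum_row_of_mem_rowStochastic hP x
  have left : ∑ x, ∑ y, P x y * u x ^ 2 = ∑ x, u x ^ 2 := by
    simp_rw [← Finset.sum_mul, row, one_mul]
  have right : ∑ x, ∑ y, P x y * u y ^ 2 = ∑ x, u x ^ 2 := by
    rw [Finset.sum_comm, ← left]
    simp_rw [hsymm.apply]
  have cross : u ⬝ᵥ P *ᵥ u = ∑ x, ∑ y, P x y * (u x * u y) := by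
    simp_rw [dotProduct, Matrix.mulVec, dotProduct, Finset.mul_sum, mul_left_comm]
  have diag : u ⬝ᵥ u = ∑ x, u x ^ 2 := by simp_rw [dotProduct, sq]
  have expand (x y : V) : P x y * (u x - u y) ^ 2 =
      P x y * u x ^ 2 + P x y * u y ^ 2 - 2 * (P x y * (u x * u y)) := by ring
  rw [dirichletForm_apply, Matrix.sub_mulVec, Matrix.one_mulVec, dotProduct_sub, cross, diag]
  simp_rw [expand, Finset.sum_sub_distrib, Finset.sum_add_distrib, ← Finset.mul_sum]
  rw [left, right]
  ring

lemma dirichletForm_self_nonneg (hP : P ∈ Matrix.rowStochastic ℝ V) (hsymm : P.IsSymm)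
    (u : V → ℝ) : 0 ≤ dirichletForm P u u := by
  rw [dirichletForm_self hP hsymm]
  refine mul_nonneg one_half_pos.le <| Finset.sum_nonneg fun x _ => Finset.sum_nonneg fun y _ => ?_
  exact mul_nonneg (Matrix.nonneg_of_mem_rowStochastic hP) (sq_nonneg _)

/-- `h` solves the boundary value problem characterising the mean hitting time `x ↦ E_x[H_A]` of
the chain with transition matrix `P`. -/
structure IsMeanHittingTime (P : Matrix V V ℝ) (A : Set V) (h : V → ℝ) : Prop where
  eq_zero : ∀ x ∈ A, h x = 0
  sub_mulVec : ∀ x ∉ A, ((1 - P) *ᵥ h) x = 1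

/-- `g` solves the boundary value problem characterising `x ↦ P_x[H_A ≤ T_B]` for the chain with
transition matrix `P`, where `T_B` is the exit time of `B ⊇ A`: the equilibrium potential of the
condenser with plates `A` and `Bᶜ`. -/
structure IsEquilibriumPotential (P : Matrix V V ℝ) (A B : Set V) (g : V → ℝ) : Prop where
  eq_one : ∀ x ∈ A, g x = 1
  eq_zero : ∀ x ∉ B, g x = 0
  harmonic : ∀ x ∈ B \ A, ((1 - P) *ᵥ g) x = 0

namespace IsMeanHittingTime

lemma dirichletForm_right (hh : IsMeanHittingTime P A h) (hu : ∀ x ∈ A, u x = 0) :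
    dirichletForm P u h = ∑ x, u x := by
  rw [dirichletForm_apply]
  refine Finset.sum_congr rfl fun x _ => ?_
  by_cases hx : x ∈ A
  · rw [hu x hx, zero_mul]
  · rw [hh.sub_mulVec x hx, mul_one]

lemma dirichletForm_self_eq_sum (hh : IsMeanHittingTime P A h) : dirichletForm P h h = ∑ x, h x :=
  hh.dirichletForm_right hh.eq_zero

lemma dirichletForm_left (hP : P ∈ Matrix.rowStochastic ℝ V) (hsymm : P.IsSymm)
    (hh : IsMeanHittingTime P A h) (hg : ∀ x ∈ A, g x = 1) :
    dirichletForm P g h = -∑ x, (1 - g x) := by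
  have : dirichletForm P (1 - g) h = ∑ x, (1 - g x) :=
    hh.dirichletForm_right fun x hx => by rw [Pi.sub_apply, Pi.one_apply, hg x hx, sub_self]
  rw [← this, map_sub, LinearMap.sub_apply, dirichletForm_one_left hP hsymm, zero_sub, neg_neg]

lemma sum_pos (hP : P ∈ Matrix.rowStochastic ℝ V) (hh : IsMeanHittingTime P A h)
    (hA : A ≠ Set.univ) (hnonneg : ∀ x, 0 ≤ h x) : 0 < ∑ x, h x := by
  obtain ⟨x, hx⟩ := (Set.ne_univ_iff_exists_notMem A).1 hA
  refine Finset.sum_pos' (fun x _ => hnonneg x) ⟨x, Finset.mem_univ x, ?_⟩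
  have step : h x - (P *ᵥ h) x = 1 := by
    rw [← hh.sub_mulVec x hx, Matrix.sub_mulVec, Matrix.one_mulVec, Pi.sub_apply]
  have := Matrix.nonneg_mulVec_of_mem_rowStochastic hP hnonneg x
  linarith

end IsMeanHittingTime

lemma IsEquilibriumPotential.dirichletForm_nonpos (hP : P ∈ Matrix.rowStochastic ℝ V)
    (hg : IsEquilibriumPotential P A B g) (hg0 : ∀ x, 0 ≤ g x) (huA : ∀ x ∈ A, u x = 0)
    (huB : ∀ x ∉ B, 0 ≤ u x) : dirichletForm P u g ≤ 0 := by
  rw [dirichletForm_apply]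
  refine Finset.sum_nonpos fun x _ => ?_
  by_cases hA : x ∈ A
  · rw [huA x hA, zero_mul]
  by_cases hB : x ∈ B
  · rw [hg.harmonic x ⟨hB, hA⟩, mul_zero]
  · refine mul_nonpos_of_nonneg_of_nonpos (huB x hB) ?_
    rw [Matrix.sub_mulVec, Matrix.one_mulVec, Pi.sub_apply, hg.eq_zero x hB, zero_sub]
    exact neg_nonpos.2 (Matrix.nonneg_mulVec_of_mem_rowStochastic hP hg0 x)

namespace IsMeanHittingTime

variable {c m s : ℝ}

lemma sq_ncard_compl_le (hP : P ∈ Matrix.rowStochastic ℝ V) (hsymm : P.IsSymm)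
    (hh : IsMeanHittingTime P A h) (hg : IsEquilibriumPotential P A B g) (hg1 : ∀ x, g x ≤ 1) :
    (Bᶜ.ncard : ℝ) ^ 2 ≤ dirichletForm P g g * ∑ x, h x := by
  have hcard : (Bᶜ.ncard : ℝ) ≤ ∑ x, (1 - g x) := by
    rw [Set.ncard_eq_toFinset_card', Finset.card_eq_sum_ones, Nat.cast_sum, Nat.cast_one]
    calc ∑ _x ∈ Bᶜ.toFinset, (1 : ℝ) = ∑ x ∈ Bᶜ.toFinset, (1 - g x) :=
          Finset.sum_congr rfl fun x hx => by rw [hg.eq_zero x (Set.mem_toFinset.1 hx), sub_zero]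
      _ ≤ ∑ x, (1 - g x) := Finset.sum_le_univ_sum_of_nonneg fun x => sub_nonneg.2 (hg1 x)
  calc (Bᶜ.ncard : ℝ) ^ 2 ≤ (∑ x, (1 - g x)) ^ 2 := by gcongr
    _ = dirichletForm P g h ^ 2 := by rw [hh.dirichletForm_left hP hsymm hg.eq_one, neg_sq]
    _ ≤ dirichletForm P g g * dirichletForm P h h :=
      (dirichletForm P).apply_sq_le_of_symm (dirichletForm_self_nonneg hP hsymm)
        (LinearMap.BilinForm.isSymm_iff.1 (dirichletForm_isSymm hsymm)) g h
    _ = dirichletForm P g g * ∑ x, h x := by rw [hh.dirichletForm_self_eq_sum]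

lemma dirichletForm_le_neg_mul (hP : P ∈ Matrix.rowStochastic ℝ V) (hsymm : P.IsSymm)
    (hh : IsMeanHittingTime P A h) (hg : IsEquilibriumPotential P A B g) (hg0 : ∀ x, 0 ≤ g x)
    (hc : ∀ x ∉ B, c ≤ h x) : dirichletForm P h g ≤ -c * dirichletForm P g g := by
  have hnonpos : dirichletForm P (h - c • (1 - g)) g ≤ 0 := by
    refine hg.dirichletForm_nonpos hP hg0 (fun x hx => ?_) fun x hx => ?_
    · simp [hh.eq_zero x hx, hg.eq_one x hx]
    · simpa [hg.eq_zero x hx] using hc x hx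
  simp only [map_sub, map_smul, LinearMap.sub_apply, LinearMap.smul_apply, smul_eq_mul,
    dirichletForm_one_left hP hsymm] at hnonpos
  linarith

lemma mul_dirichletForm_le_sum (hP : P ∈ Matrix.rowStochastic ℝ V) (hsymm : P.IsSymm)
    (hh : IsMeanHittingTime P A h) (hg : IsEquilibriumPotential P A B g) (hg0 : ∀ x, 0 ≤ g x)
    (hm : 0 ≤ m) (hc : ∀ x ∉ B, c ≤ h x) : m * (2 * c - m) * dirichletForm P g g ≤ ∑ x, h x := by
  have hsq : 0 ≤ dirichletForm P (h + m • g) (h + m • g) :=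
    dirichletForm_self_nonneg hP hsymm _
  simp only [map_add, map_smul, LinearMap.add_apply, LinearMap.smul_apply, smul_eq_mul,
    hh.dirichletForm_self_eq_sum, (dirichletForm_isSymm hsymm).eq g h] at hsq
  have hcross := mul_le_mul_of_nonneg_left (hh.dirichletForm_le_neg_mul hP hsymm hg hg0 hc) hm
  linarith

lemma dirichletForm_mul_le_one_div [Nonempty V] (hP : P ∈ Matrix.rowStochastic ℝ V)
    (hsymm : P.IsSymm) (hh : IsMeanHittingTime P A h) (hg : IsEquilibriumPotential P A B g)
    (hg0 : ∀ x, 0 ≤ g x) (hpos : 0 < ∑ x, h x)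
    (hs : ∀ x ∉ B, 1 - h x / ((∑ x, h x) / Fintype.card V) ≤ s) :
    dirichletForm P g g / Fintype.card V * (1 - 2 * s) ≤ 1 / ((∑ x, h x) / Fintype.card V) := by
  have hn : (0 : ℝ) < Fintype.card V := Nat.cast_pos.2 Fintype.card_pos
  set m := (∑ x, h x) / Fintype.card V
  have hmpos : 0 < m := div_pos hpos hn
  have hc (x : V) (hx : x ∉ B) : m * (1 - s) ≤ h x := by
    rw [mul_comm, ← le_div_iff₀ hmpos]
    linarith [hs x hx]
  have bound := hh.mul_dirichletForm_le_sum hP hsymm hg hg0 hmpos.le hc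
  rw [show ∑ x, h x = m * Fintype.card V from (div_mul_cancel₀ _ hn.ne').symm] at bound
  rw [le_div_iff₀ hmpos, div_mul_eq_mul_div, div_mul_eq_mul_div, div_le_one hn]
  refine le_of_mul_le_mul_left ?_ hmpos
  linarith

lemma one_div_le_dirichletForm_div [Nonempty V] (hP : P ∈ Matrix.rowStochastic ℝ V)
    (hsymm : P.IsSymm) (hh : IsMeanHittingTime P A h) (hg : IsEquilibriumPotential P A B g)
    (hg1 : ∀ x, g x ≤ 1) (hpos : 0 < ∑ x, h x) (hB : B ≠ Set.univ) :
    1 / ((∑ x, h x) / Fintype.card V) ≤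
      dirichletForm P g g / Fintype.card V / ((Bᶜ.ncard : ℝ) / Fintype.card V) ^ 2 := by
  have hn : (0 : ℝ) < Fintype.card V := Nat.cast_pos.2 Fintype.card_pos
  have hk : (0 : ℝ) < Bᶜ.ncard :=
    Nat.cast_pos.2 ((Set.ncard_pos (Set.toFinite _)).2 (Set.nonempty_compl.2 hB))
  have bound := hh.sq_ncard_compl_le hP hsymm hg hg1
  have hscale : dirichletForm P g g / Fintype.card V / ((Bᶜ.ncard : ℝ) / Fintype.card V) ^ 2 =
      dirichletForm P g g * Fintype.card V / (Bᶜ.ncard : ℝ) ^ 2 := by field_simp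
  rw [one_div_div, hscale, div_le_div_iff₀ hpos (by positivity)]
  linarith [mul_le_mul_of_nonneg_left bound hn.le]

end IsMeanHittingTime

end DirichletForm

section MinimumPrinciple

open scoped Matrix

variable {V : Type*} [Fintype V] [DecidableEq V] {P : Matrix V V ℝ} {A : Set V} {u : V → ℝ}

lemma eq_of_isMinOn_of_superharmonic (hP : P ∈ Matrix.rowStochastic ℝ V) {x y : V}
    (hmin : ∀ z, u x ≤ u z) (hx : 0 ≤ ((1 - P) *ᵥ u) x) (hxy : 0 < P x y) : u y = u x := by
  have hnonneg (z : V) : 0 ≤ P x z * (u z - u x) :=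
    mul_nonneg (Matrix.nonneg_of_mem_rowStochastic hP) (sub_nonneg.2 (hmin z))
  have hsum : ∑ z, P x z * (u z - u x) = -((1 - P) *ᵥ u) x := by
    simp_rw [mul_sub, Finset.sum_sub_distrib, ← Finset.sum_mul,
      Matrix.sum_row_of_mem_rowStochastic hP, one_mul, Matrix.sub_mulVec, Matrix.one_mulVec,
      Pi.sub_apply, neg_sub]
    rfl
  have hzero : ∑ z, P x z * (u z - u x) = 0 :=
    le_antisymm (by linarith) (Finset.sum_nonneg fun z _ => hnonneg z)
  have := (Finset.sum_eq_zero_iff_of_nonneg fun z _ => hnonneg z).1 hzero y (Finset.mem_univ y)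
  exact sub_eq_zero.1 ((mul_eq_zero.1 this).resolve_left hxy.ne')

lemma nonneg_of_superharmonic_compl (hP : P ∈ Matrix.rowStochastic ℝ V)
    (hacc : ∀ x, ∃ a ∈ A, Relation.ReflTransGen (fun x y => 0 < P x y) x a)
    (hA : ∀ x ∈ A, 0 ≤ u x) (hsuper : ∀ x ∉ A, 0 ≤ ((1 - P) *ᵥ u) x) (x : V) : 0 ≤ u x := by
  have : Nonempty V := ⟨x⟩
  obtain ⟨x₀, hmin⟩ := Finite.exists_min u
  obtain ⟨a, ha, hpath⟩ := hacc x₀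
  -- The minimum is propagated along the path until it reaches `A`.
  suffices ∀ y, Relation.ReflTransGen (fun x y => 0 < P x y) y a → u y = u x₀ → 0 ≤ u x₀ from
    (this x₀ hpath rfl).trans (hmin x)
  intro y hy
  induction hy using Relation.ReflTransGen.head_induction_on with
  | refl => exact fun heq => heq ▸ hA a ha
  | @head y z hyz _ ih =>
    intro heq
    by_cases hyA : y ∈ A
    · exact heq ▸ hA y hyA
    · exact ih <| (eq_of_isMinOn_of_superharmonic hP (heq ▸ hmin) (hsuper y hyA) hyz).trans heq

lemma exists_isMeanHittingTime (hP : P ∈ Matrix.rowStochastic ℝ V)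
    (hacc : ∀ x, ∃ a ∈ A, Relation.ReflTransGen (fun x y => 0 < P x y) x a) :
    ∃ u, IsMeanHittingTime P A u ∧ ∀ x, 0 ≤ u x := by
  let M : Matrix V V ℝ := Matrix.of fun x => if x ∈ A then (1 : Matrix V V ℝ) x else (1 - P) x
  have mem (u : V → ℝ) {x : V} (hx : x ∈ A) : (M *ᵥ u) x = u x := by
    conv_rhs => rw [← Matrix.one_mulVec u]
    simp [M, Matrix.mulVec, hx]
  have notMem (u : V → ℝ) {x : V} (hx : x ∉ A) : (M *ᵥ u) x = ((1 - P) *ᵥ u) x := by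
    simp [M, Matrix.mulVec, hx]
  have nonneg {u : V → ℝ} (hu : ∀ x, 0 ≤ (M *ᵥ u) x) : ∀ x, 0 ≤ u x :=
    nonneg_of_superharmonic_compl hP hacc (fun x hx => mem u hx ▸ hu x)
      fun x hx => notMem u hx ▸ hu x
  have inj : Function.Injective M.mulVecLin := by
    refine (injective_iff_map_eq_zero _).2 fun u hu => funext fun x => ?_
    rw [Matrix.mulVecLin_apply] at hu
    exact le_antisymm (neg_nonneg.1 <| nonneg (u := -u) (by simp [Matrix.mulVec_neg, hu]) x)
      (nonneg (by simp [hu]) x)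
  obtain ⟨u, hu⟩ := LinearMap.injective_iff_surjective.1 inj fun x => if x ∈ A then 0 else 1
  rw [Matrix.mulVecLin_apply] at hu
  refine ⟨u, ⟨fun x hx => ?_, fun x hx => ?_⟩, nonneg fun x => ?_⟩
  · exact (mem u hx).symm.trans ((congrFun hu x).trans (if_pos hx))
  · exact (notMem u hx).symm.trans ((congrFun hu x).trans (if_neg hx))
  · rw [hu]
    positivity

end MinimumPrinciple

section PathSpace

variable {α : Type*} {A B : Set α} {n : ℕ} {ω : ℕ → α}

/-- The time shift on path space. -/
def shift (ω : ℕ → α) : ℕ → α := fun n => ω (n + 1)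

/-- The event that the path stays outside `A` up to time `n`, that is `{H_A > n}`. -/
def avoidUpTo (A : Set α) (n : ℕ) : Set (ℕ → α) := {ω | ∀ k ≤ n, ω k ∉ A}

/-- The event that the path visits `A`, and stays in `B` before it does so: the discrete-time
version of `{H_A ≤ T_B}` on `{H_A < ∞}`. -/
def enterBefore (A B : Set α) : Set (ℕ → α) := {ω | ∃ n, ω n ∈ A ∧ ∀ k < n, ω k ∈ B}

lemma shift_mem_avoidUpTo_iff (h : ω 0 ∉ A) : shift ω ∈ avoidUpTo A n ↔ ω ∈ avoidUpTo A (n + 1) :=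
  ⟨fun hω k hk => match k with
    | 0 => h
    | k + 1 => hω k (Nat.le_of_succ_le_succ hk),
  fun hω k hk => hω (k + 1) (Nat.succ_le_succ hk)⟩

lemma shift_mem_enterBefore_iff (hA : ω 0 ∉ A) (hB : ω 0 ∈ B) :
    shift ω ∈ enterBefore A B ↔ ω ∈ enterBefore A B := by
  constructor
  · rintro ⟨n, hn, hlt⟩
    refine ⟨n + 1, hn, fun k hk => ?_⟩
    cases k with
    | zero => exact hB
    | succ k => exact hlt k (Nat.lt_of_succ_lt_succ hk)
  · rintro ⟨_ | n, hn, hlt⟩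
    · exact absurd hn hA
    · exact ⟨n, hn, fun k hk => hlt (k + 1) (Nat.succ_lt_succ hk)⟩

lemma mem_enterBefore_of_mem (h : ω 0 ∈ A) : ω ∈ enterBefore A B :=
  ⟨0, h, fun k hk => absurd hk k.not_lt_zero⟩

lemma notMem_enterBefore_of_notMem (hA : ω 0 ∉ A) (hB : ω 0 ∉ B) : ω ∉ enterBefore A B := by
  rintro ⟨_ | n, hn, hlt⟩
  · exact hA hn
  · exact hB (hlt 0 n.succ_pos)

variable [MeasurableSpace α]

lemma measurable_shift : Measurable (shift : (ℕ → α) → ℕ → α) :=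
  measurable_pi_lambda _ fun n => measurable_pi_apply (n + 1)

lemma measurableSet_cylinder [MeasurableSingletonClass α] (n : ℕ) (w : ℕ → α) :
    MeasurableSet {ω : ℕ → α | ∀ k, k ≤ n → ω k = w k} := by
  simp only [Set.ofPred_forall]
  exact .iInter fun k => .iInter fun _ =>
    measurable_pi_apply (X := fun _ : ℕ => α) k (measurableSet_singleton (w k))

variable [DiscreteMeasurableSpace α]

lemma measurableSet_apply_mem (n : ℕ) (A : Set α) : MeasurableSet {ω : ℕ → α | ω n ∈ A} :=
  measurable_pi_apply n (.of_discrete (s := A))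

lemma measurableSet_avoidUpTo (A : Set α) (n : ℕ) : MeasurableSet (avoidUpTo A n) := by
  simp only [avoidUpTo, Set.ofPred_forall]
  exact .iInter fun k => .iInter fun _ => measurableSet_apply_mem k Aᶜ

lemma measurableSet_enterBefore (A B : Set α) : MeasurableSet (enterBefore A B) := by
  simp only [enterBefore, Set.ofPred_exists, Set.ofPred_and, Set.ofPred_forall]
  exact .iUnion fun n => .inter (measurableSet_apply_mem n A)
    (.iInter fun k => .iInter fun _ => measurableSet_apply_mem k B)

end PathSpace

section PathMeasure

variable {α : Type*} [MeasurableSpace α] {A : Set α}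

lemma path_measure_ext [Countable α] [MeasurableSingletonClass α] {μ μ' : Measure (ℕ → α)}
    [IsFiniteMeasure μ]
    (h : ∀ (n : ℕ) (w : ℕ → α),
      μ {ω | ∀ k, k ≤ n → ω k = w k} = μ' {ω | ∀ k, k ≤ n → ω k = w k}) :
    μ = μ' := by
  have hproj := ProbabilityTheory.isProjectiveMeasureFamily_map_restrict (P := μ)
    (X := fun k ω => ω k) fun k => (measurable_pi_apply k).aemeasurable
  refine IsProjectiveLimit.unique (P := fun I => μ.map fun ω => I.restrict (ω ·)) (fun I => rfl)
    ((isProjectiveLimit_nat_iff hproj μ').2 fun n => Measure.ext_of_singleton fun v => ?_)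
  have hmeas := Preorder.measurable_frestrictLe (X := fun _ : ℕ => α) n
  rw [Measure.map_apply hmeas (measurableSet_singleton v)]
  refine Eq.trans ?_ (Measure.map_apply hmeas (measurableSet_singleton v)).symm
  rcases (Preorder.frestrictLe (π := fun _ : ℕ => α) n ⁻¹' {v}).eq_empty_or_nonempty with
    hempty | ⟨w, rfl⟩
  · rw [hempty, measure_empty, measure_empty]
  · have : Preorder.frestrictLe (π := fun _ : ℕ => α) n ⁻¹' {Preorder.frestrictLe n w} =
        {ω | ∀ k, k ≤ n → ω k = w k} := by
      ext ω
      simp [funext_iff]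
    rw [this, h]

/-- The mean of the discrete entrance time of `A` under `m`, as the sum of its tail
probabilities. -/
def meanEntrance (m : Measure (ℕ → α)) (A : Set α) : ℝ≥0∞ := ∑' n, m (avoidUpTo A n)

lemma ae_exists_mem_of_meanEntrance_ne_top {m : Measure (ℕ → α)} (h : meanEntrance m A ≠ ∞) :
    ∀ᵐ ω ∂m, ∃ n, ω n ∈ A := by
  filter_upwards [ae_finite_setOfPred_mem h] with ω hω
  by_contra! hA
  refine Set.infinite_univ (hω.subset fun n _ => ?_)
  exact fun k _ => hA k

lemma meanEntrance_finsetSum_smul {ι : Type*} (s : Finset ι) (c : ι → ℝ≥0∞)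
    (μ : ι → Measure (ℕ → α)) :
    meanEntrance (∑ i ∈ s, c i • μ i) A = ∑ i ∈ s, c i * meanEntrance (μ i) A := by
  simp_rw [meanEntrance, Measure.finsetSum_apply, Measure.smul_apply, smul_eq_mul]
  rw [Summable.tsum_finsetSum fun _ _ => ENNReal.summable]
  simp_rw [ENNReal.tsum_mul_left]

end PathMeasure

section MarkovChain

variable {α : Type*} [MeasurableSpace α] {p : α → α → ℝ≥0∞} {init : α → ℝ≥0∞}
  {m : Measure (ℕ → α)} {μ : α → Measure (ℕ → α)} {A B : Set α} {x : α}

/-- `m` is the law on path space of the Markov chain with transition probabilities `p` and initial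
distribution `init`, characterised by its cylinder probabilities as in `IsWalkLaw`, which is the
case `p = srwStep`. -/
def IsChainLaw (p : α → α → ℝ≥0∞) (init : α → ℝ≥0∞) (m : Measure (ℕ → α)) : Prop :=
  IsProbabilityMeasure m ∧ ∀ (n : ℕ) (w : ℕ → α),
    m {ω | ∀ k, k ≤ n → ω k = w k} = init (w 0) * ∏ k ∈ Finset.range n, p (w k) (w (k + 1))

/-- `μ x` is the law of the Markov chain with transition probabilities `p` started at `x`, for every
state `x`. -/
def IsMarkovFamily (p : α → α → ℝ≥0∞) (μ : α → Measure (ℕ → α)) : Prop :=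
  ∀ x, IsChainLaw p (pointInit x) (μ x)

/-- The real matrix of the transition probabilities `p`. -/
def transitionMatrix (p : α → α → ℝ≥0∞) : Matrix α α ℝ := Matrix.of fun x y => (p x y).toReal

namespace IsMarkovFamily

lemma isProbabilityMeasure (hμ : IsMarkovFamily p μ) (x : α) : IsProbabilityMeasure (μ x) :=
  (hμ x).1

variable [MeasurableSingletonClass α]

lemma ae_apply_zero (hμ : IsMarkovFamily p μ) (x : α) : ∀ᵐ ω ∂μ x, ω 0 = x := by
  have := hμ.isProbabilityMeasure x
  have hcyl : {ω : ℕ → α | ∀ k, k ≤ 0 → ω k = x} = {ω | ω 0 = x} := by simp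
  have hone := (hμ x).2 0 fun _ => x
  rw [hcyl, pointInit, if_pos rfl, Finset.range_zero, Finset.prod_empty, mul_one] at hone
  have hmeas : MeasurableSet {ω : ℕ → α | ω 0 = x} :=
    measurable_pi_apply (X := fun _ : ℕ => α) 0 (measurableSet_singleton x)
  exact (mem_ae_iff_prob_eq_one hmeas).2 hone

lemma measure_congr (hμ : IsMarkovFamily p μ) {E F : Set (ℕ → α)}
    (h : ∀ ω : ℕ → α, ω 0 = x → (ω ∈ E ↔ ω ∈ F)) : μ x E = μ x F :=
  MeasureTheory.measure_congr <| (hμ.ae_apply_zero x).mono fun ω hω => propext (h ω hω)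

lemma measure_shift_preimage_cylinder (hμ : IsMarkovFamily p μ) (x : α) (n : ℕ) (w : ℕ → α) :
    μ x (shift ⁻¹' {ω | ∀ k, k ≤ n → ω k = w k}) =
      p x (w 0) * ∏ k ∈ Finset.range n, p (w k) (w (k + 1)) := by
  let v : ℕ → α := fun k => Nat.casesOn k x w
  calc μ x (shift ⁻¹' {ω | ∀ k, k ≤ n → ω k = w k})
      = μ x {ω | ∀ k, k ≤ n + 1 → ω k = v k} := hμ.measure_congr fun ω hω =>
        ⟨fun h k hk => match k with
          | 0 => hω
          | k + 1 => h k (Nat.le_of_succ_le_succ hk),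
        fun h k hk => h (k + 1) (Nat.succ_le_succ hk)⟩
    _ = p x (w 0) * ∏ k ∈ Finset.range n, p (w k) (w (k + 1)) := by
      rw [(hμ x).2, Finset.prod_range_succ', mul_comm (∏ k ∈ _, _)]
      exact (congrArg (· * _) (if_pos rfl)).trans (one_mul _)

lemma measure_avoidUpTo_of_mem (hμ : IsMarkovFamily p μ) (hx : x ∈ A) (n : ℕ) :
    μ x (avoidUpTo A n) = 0 := by
  rw [hμ.measure_congr (F := ∅) fun ω hω => ?_, measure_empty]
  exact iff_of_false (fun h => h 0 n.zero_le (hω ▸ hx)) (Set.notMem_empty ω)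

lemma measure_avoidUpTo_zero (hμ : IsMarkovFamily p μ) (hx : x ∉ A) : μ x (avoidUpTo A 0) = 1 := by
  have := hμ.isProbabilityMeasure x
  rw [hμ.measure_congr (F := Set.univ) fun ω hω => ?_, measure_univ]
  refine iff_of_true (fun k hk => ?_) (Set.mem_univ ω)
  rwa [Nat.le_zero.1 hk, hω]

lemma meanEntrance_of_mem (hμ : IsMarkovFamily p μ) (hx : x ∈ A) : meanEntrance (μ x) A = 0 := by
  simp_rw [meanEntrance, hμ.measure_avoidUpTo_of_mem hx, tsum_zero]

variable [Fintype α]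

lemma map_shift (hμ : IsMarkovFamily p μ) (x : α) :
    (μ x).map shift = ∑ y, p x y • μ y := by
  have := hμ.isProbabilityMeasure x
  have := Measure.isProbabilityMeasure_map (μ := μ x) measurable_shift.aemeasurable
  refine path_measure_ext fun n w => ?_
  rw [Measure.map_apply measurable_shift (measurableSet_cylinder n w),
    hμ.measure_shift_preimage_cylinder, Measure.finsetSum_apply]
  simp_rw [Measure.smul_apply, smul_eq_mul, (hμ _).2, pointInit]
  simp

lemma measure_shift_preimage (hμ : IsMarkovFamily p μ) (x : α) {E : Set (ℕ → α)}
    (hE : MeasurableSet E) : μ x (shift ⁻¹' E) = ∑ y, p x y * μ y E := by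
  rw [← Measure.map_apply measurable_shift hE, hμ.map_shift, Measure.finsetSum_apply]
  rfl

lemma sum_eq_one (hμ : IsMarkovFamily p μ) (x : α) : ∑ y, p x y = 1 := by
  have := hμ.isProbabilityMeasure
  simpa using (hμ.measure_shift_preimage x MeasurableSet.univ).symm

omit [Fintype α] in
lemma ne_top [Finite α] (hμ : IsMarkovFamily p μ) (x y : α) : p x y ≠ ∞ := by
  have := Fintype.ofFinite α
  have hle := Finset.single_le_sum (fun y _ => zero_le (a := p x y)) (Finset.mem_univ y)
  rw [hμ.sum_eq_one] at hle
  exact ne_top_of_le_ne_top ENNReal.one_ne_top hle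

lemma eq_sum_smul (hμ : IsMarkovFamily p μ) (hm : IsChainLaw p init m) : m = ∑ x, init x • μ x := by
  have := hm.1
  refine path_measure_ext fun n w => ?_
  rw [hm.2, Measure.finsetSum_apply]
  simp_rw [Measure.smul_apply, smul_eq_mul, (hμ _).2, pointInit]
  simp

lemma transitionMatrix_mem_rowStochastic [DecidableEq α] (hμ : IsMarkovFamily p μ) :
    transitionMatrix p ∈ Matrix.rowStochastic ℝ α := by
  refine Matrix.mem_rowStochastic_iff_sum.2 ⟨fun _ _ => ENNReal.toReal_nonneg, fun x => ?_⟩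
  simp_rw [transitionMatrix, Matrix.of_apply]
  rw [← ENNReal.toReal_sum fun y _ => hμ.ne_top x y, hμ.sum_eq_one, ENNReal.toReal_one]

lemma toReal_sum_mul (hμ : IsMarkovFamily p μ) {F : α → ℝ≥0∞} (hF : ∀ y, F y ≠ ∞) (x : α) :
    (∑ y, p x y * F y).toReal = (transitionMatrix p).mulVec (fun y => (F y).toReal) x := by
  rw [ENNReal.toReal_sum fun y _ => ENNReal.mul_ne_top (hμ.ne_top x y) (hF y)]
  simp_rw [ENNReal.toReal_mul]
  rfl

lemma measure_avoidUpTo_succ (hμ : IsMarkovFamily p μ) (hx : x ∉ A) (n : ℕ) :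
    μ x (avoidUpTo A (n + 1)) = ∑ y, p x y * μ y (avoidUpTo A n) := by
  rw [← hμ.measure_shift_preimage x (measurableSet_avoidUpTo A n)]
  exact hμ.measure_congr fun ω hω => (shift_mem_avoidUpTo_iff (hω ▸ hx)).symm

lemma meanEntrance_of_notMem (hμ : IsMarkovFamily p μ) (hx : x ∉ A) :
    meanEntrance (μ x) A = 1 + ∑ y, p x y * meanEntrance (μ y) A := by
  rw [meanEntrance, tsum_eq_zero_add' ENNReal.summable, hμ.measure_avoidUpTo_zero hx]
  simp_rw [hμ.measure_avoidUpTo_succ hx]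
  rw [Summable.tsum_finsetSum fun _ _ => ENNReal.summable]
  simp_rw [ENNReal.tsum_mul_left, meanEntrance]

lemma meanEntrance_le_of_one_add_sum_le (hμ : IsMarkovFamily p μ) {U : α → ℝ≥0∞}
    (hU : ∀ x ∉ A, 1 + ∑ y, p x y * U y ≤ U x) (x : α) : meanEntrance (μ x) A ≤ U x := by
  refine ENNReal.tsum_le_of_sum_range_le fun n => ?_
  induction n generalizing x with
  | zero => simp
  | succ n ih =>
    by_cases hx : x ∈ A
    · simp [hμ.measure_avoidUpTo_of_mem hx]
    · calc ∑ k ∈ Finset.range (n + 1), μ x (avoidUpTo A k)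
          = 1 + ∑ y, p x y * ∑ k ∈ Finset.range n, μ y (avoidUpTo A k) := by
            rw [Finset.sum_range_succ', hμ.measure_avoidUpTo_zero hx, add_comm]
            simp_rw [hμ.measure_avoidUpTo_succ hx, Finset.mul_sum]
            rw [Finset.sum_comm]
        _ ≤ 1 + ∑ y, p x y * U y := by gcongr with y; exact ih y
        _ ≤ U x := hU x hx

omit [Fintype α] in
lemma meanEntrance_ne_top [Finite α] (hμ : IsMarkovFamily p μ)
    (hacc : ∀ x, ∃ a ∈ A, Relation.ReflTransGen (fun x y => 0 < transitionMatrix p x y) x a)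
    (x : α) : meanEntrance (μ x) A ≠ ∞ := by
  have := Fintype.ofFinite α
  obtain ⟨u, hu, hnonneg⟩ :=
    exists_isMeanHittingTime hμ.transitionMatrix_mem_rowStochastic hacc
  refine ne_top_of_le_ne_top (b := ENNReal.ofReal (u x)) ENNReal.ofReal_ne_top <|
    hμ.meanEntrance_le_of_one_add_sum_le (U := fun x => ENNReal.ofReal (u x)) (fun x hx => ?_) x
  have hsum : (∑ y, p x y * ENNReal.ofReal (u y)).toReal = (transitionMatrix p).mulVec u x := by
    rw [hμ.toReal_sum_mul fun _ => ENNReal.ofReal_ne_top]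
    simp_rw [ENNReal.toReal_ofReal (hnonneg _)]
  have hfin : ∑ y, p x y * ENNReal.ofReal (u y) ≠ ∞ :=
    ENNReal.sum_ne_top.2 fun y _ => ENNReal.mul_ne_top (hμ.ne_top x y) ENNReal.ofReal_ne_top
  have step := hu.sub_mulVec x hx
  rw [Matrix.sub_mulVec, Matrix.one_mulVec, Pi.sub_apply, ← hsum] at step
  rw [← ENNReal.ofReal_toReal hfin, ← ENNReal.ofReal_one,
    ← ENNReal.ofReal_add zero_le_one ENNReal.toReal_nonneg]
  exact ENNReal.ofReal_le_ofReal (by linarith)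

theorem isMeanHittingTime_toReal_meanEntrance [DecidableEq α] (hμ : IsMarkovFamily p μ)
    (hfin : ∀ x, meanEntrance (μ x) A ≠ ∞) :
    IsMeanHittingTime (transitionMatrix p) A fun x => (meanEntrance (μ x) A).toReal where
  eq_zero x hx := by rw [hμ.meanEntrance_of_mem hx, ENNReal.toReal_zero]
  sub_mulVec x hx := by
    have hsum : ∑ y, p x y * meanEntrance (μ y) A ≠ ∞ :=
      ENNReal.sum_ne_top.2 fun y _ => ENNReal.mul_ne_top (hμ.ne_top x y) (hfin y)
    rw [Matrix.sub_mulVec, Matrix.one_mulVec, Pi.sub_apply, ← hμ.toReal_sum_mul hfin,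
      hμ.meanEntrance_of_notMem hx, ENNReal.toReal_add ENNReal.one_ne_top hsum,
      ENNReal.toReal_one, add_sub_cancel_right]

theorem isEquilibriumPotential_toReal_enterBefore [DecidableEq α] (hμ : IsMarkovFamily p μ)
    (hAB : A ⊆ B) :
    IsEquilibriumPotential (transitionMatrix p) A B
      fun x => (μ x (enterBefore A B)).toReal where
  eq_one x hx := by
    have := hμ.isProbabilityMeasure x
    rw [hμ.measure_congr (F := Set.univ) fun ω hω =>
      iff_of_true (mem_enterBefore_of_mem (hω ▸ hx)) (Set.mem_univ ω), measure_univ,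
      ENNReal.toReal_one]
  eq_zero x hx := by
    rw [hμ.measure_congr (F := ∅) fun ω hω => iff_of_false
      (notMem_enterBefore_of_notMem (hω ▸ fun h => hx (hAB h)) (hω ▸ hx)) (Set.notMem_empty ω),
      measure_empty, ENNReal.toReal_zero]
  harmonic x hx := by
    have := hμ.isProbabilityMeasure
    rw [Matrix.sub_mulVec, Matrix.one_mulVec, Pi.sub_apply,
      ← hμ.toReal_sum_mul fun y => measure_ne_top (μ y) _,
      ← hμ.measure_shift_preimage x (measurableSet_enterBefore A B), sub_eq_zero]
    exact congrArg ENNReal.toReal <| hμ.measure_congr fun ω hω =>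
      (shift_mem_enterBefore_iff (hω ▸ hx.2) (hω ▸ hx.1)).symm

lemma meanEntrance_eq_sum (hμ : IsMarkovFamily p μ) (hm : IsChainLaw p init m) (A : Set α) :
    meanEntrance m A = ∑ x, init x * meanEntrance (μ x) A := by
  rw [hμ.eq_sum_smul hm, meanEntrance_finsetSum_smul]

end IsMarkovFamily

end MarkovChain

section ExponentialGaps

variable {ν : Measure (ℕ → ℝ)}

lemma measurableSet_lt_apply (k : ℕ) (t : ℝ) : MeasurableSet {g : ℕ → ℝ | t < g k} :=
  measurableSet_lt measurable_const (measurable_pi_apply k)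

lemma IsIIDExp.ae_pos (hν : IsIIDExp ν) : ∀ᵐ g ∂ν, ∀ k, 0 < g k := by
  have := hν.1
  refine ae_all_iff.2 fun n => ?_
  have hone : ν {g | ∀ k, k ≤ n → 0 < g k} = 1 := by
    simpa using hν.2 n (fun _ => 0) fun _ => le_rfl
  have hle := measure_mono (μ := ν) fun g (hg : ∀ k, k ≤ n → 0 < g k) =>
    show g ∈ {g : ℕ → ℝ | 0 < g n} from hg n le_rfl
  exact (mem_ae_iff_prob_eq_one (measurableSet_lt_apply n 0)).2
    (le_antisymm prob_le_one (hone ▸ hle))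

lemma IsIIDExp.measure_forall_lt (hν : IsIIDExp ν) (F : Finset ℕ) {s : ℕ → ℝ}
    (hs : ∀ k, 0 ≤ s k) :
    ν {g | ∀ k ∈ F, s k < g k} = ENNReal.ofReal (Real.exp (-∑ k ∈ F, s k)) := by
  have hF : ∀ k ∈ F, k ≤ F.sup id := fun k hk => Finset.le_sup (f := id) hk
  have hinter : Finset.range (F.sup id + 1) ∩ F = F :=
    Finset.inter_eq_right.2 fun k hk => Finset.mem_range.2 (Nat.lt_succ_of_le (hF k hk))
  have hext := hν.2 (F.sup id) (fun k => if k ∈ F then s k else 0) fun k => by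
    split_ifs; exacts [hs k, le_rfl]
  rw [Finset.sum_ite_mem, hinter] at hext
  rw [← hext]
  refine measure_congr ?_
  filter_upwards [hν.ae_pos] with g hg
  refine propext ⟨fun hk k _ => ?_, fun hk k hkF => by simpa [hkF] using hk k (hF k hkF)⟩
  by_cases hkF : k ∈ F
  · simpa [hkF] using hk k hkF
  · simpa [hkF] using hg k

lemma IsIIDExp.measure_lt (hν : IsIIDExp ν) (k : ℕ) {t : ℝ} (ht : 0 ≤ t) :
    ν {g | t < g k} = ENNReal.ofReal (Real.exp (-t)) := by
  simpa using hν.measure_forall_lt {k} (s := fun _ => t) fun _ => ht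

lemma IsIIDExp.lintegral_ofReal_apply (hν : IsIIDExp ν) (k : ℕ) :
    ∫⁻ g, ENNReal.ofReal (g k) ∂ν = 1 := by
  rw [lintegral_eq_lintegral_meas_lt ν (hν.ae_pos.mono fun g hg => (hg k).le)
    (measurable_pi_apply k).aemeasurable,
    setLIntegral_congr_fun measurableSet_Ioi fun t ht => hν.measure_lt k (le_of_lt ht),
    ← ofReal_integral_eq_lintegral_ofReal (integrableOn_exp_neg_Ioi 0)
      (Eventually.of_forall fun t => (Real.exp_pos _).le), integral_exp_neg_Ioi_zero,
    ENNReal.ofReal_one]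

lemma IsIIDExp.iIndepSet_lt_apply (hν : IsIIDExp ν) {s : ℕ → ℝ} (hs : ∀ k, 0 ≤ s k) :
    ProbabilityTheory.iIndepSet (fun k => {g : ℕ → ℝ | s k < g k}) ν := by
  have := hν.1
  rw [ProbabilityTheory.iIndepSet_iff_meas_biInter fun k => measurableSet_lt_apply k (s k)]
  intro F
  have hinter : (⋂ k ∈ F, {g : ℕ → ℝ | s k < g k}) = {g | ∀ k ∈ F, s k < g k} := by
    ext g
    simp
  rw [hinter, hν.measure_forall_lt F hs, Finset.prod_congr rfl fun k _ => hν.measure_lt k (hs k),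
    ← ENNReal.ofReal_prod_of_nonneg fun k _ => (Real.exp_pos _).le, ← Real.exp_sum,
    Finset.sum_neg_distrib]

lemma IsIIDExp.ae_frequently_one_lt (hν : IsIIDExp ν) : ∀ᵐ g ∂ν, ∃ᶠ k in atTop, 1 < g k := by
  have := hν.1
  have hmeas k := measurableSet_lt_apply k 1
  have hlimsup := ProbabilityTheory.measure_limsup_eq_one hmeas
    (hν.iIndepSet_lt_apply fun _ => zero_le_one) <| by
      simp_rw [hν.measure_lt _ zero_le_one]
      exact ENNReal.tsum_const_eq_top_of_ne_zero (by simp [Real.exp_pos])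
  filter_upwards
    [(mem_ae_iff_prob_eq_one (MeasurableSet.measurableSet_limsup hmeas)).2 hlimsup] with g hg
  rwa [mem_limsup_iff_frequently_mem] at hg

/-- The time of the `n`-th jump of the walk with interarrival gaps `g`. -/
def jumpTime (g : ℕ → ℝ) (n : ℕ) : ℝ := ∑ k ∈ Finset.range n, g k

/-- The jump times with interarrival gaps `g` are strictly increasing and do not accumulate, so that
`nJumps g t` is the supremum of a nonempty bounded set for `t ≥ 0`. -/
structure NonExplosive (g : ℕ → ℝ) : Prop where
  pos : ∀ k, 0 < g k
  tendsto_jumpTime : Tendsto (jumpTime g) atTop atTop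

lemma IsIIDExp.ae_nonExplosive (hν : IsIIDExp ν) : ∀ᵐ g ∂ν, NonExplosive g := by
  filter_upwards [hν.ae_pos, hν.ae_frequently_one_lt] with g hpos hfreq
  refine ⟨hpos, (not_summable_iff_tendsto_nat_atTop_of_nonneg fun k => (hpos k).le).1 fun hg => ?_⟩
  obtain ⟨k, hgt, hlt⟩ :=
    (hfreq.and_eventually (hg.tendsto_atTop_zero.eventually_lt_const one_pos)).exists
  exact lt_asymm hgt hlt

end ExponentialGaps

section ContinuousTime

variable {d N : ℕ} {g : ℕ → ℝ} {V A B : Set (Torus d N)} {ω : ℕ → Torus d N}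

namespace NonExplosive

lemma jumpTime_nonneg (hg : NonExplosive g) (n : ℕ) : 0 ≤ jumpTime g n :=
  Finset.sum_nonneg fun k _ => (hg.pos k).le

lemma strictMono_jumpTime (hg : NonExplosive g) : StrictMono (jumpTime g) :=
  strictMono_nat_of_lt_succ fun n => by
    rw [jumpTime, jumpTime, Finset.sum_range_succ]
    exact lt_add_of_pos_right _ (hg.pos n)

lemma nJumps_jumpTime (hg : NonExplosive g) (n : ℕ) : nJumps g (jumpTime g n) = n := by
  have : {m | jumpTime g m ≤ jumpTime g n} = Set.Iic n :=
    Set.ext fun m => hg.strictMono_jumpTime.le_iff_le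
  exact (congrArg sSup this).trans csSup_Iic

lemma jumpTime_nJumps_le (hg : NonExplosive g) {t : ℝ} (ht : 0 ≤ t) :
    jumpTime g (nJumps g t) ≤ t := by
  obtain ⟨n, hn⟩ := (hg.tendsto_jumpTime.eventually_gt_atTop t).exists
  exact Nat.sSup_mem (s := {m | jumpTime g m ≤ t}) ⟨0, by simpa [jumpTime] using ht⟩
    ⟨n, fun m (hm : jumpTime g m ≤ t) =>
      (hg.strictMono_jumpTime.lt_iff_lt.1 (hm.trans_lt hn)).le⟩

lemma hitT_eq_jumpTime (hg : NonExplosive g) {n : ℕ} (hn : IsLeast {k | ω k ∈ V} n) :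
    hitT V (ω, g) = jumpTime g n := by
  refine IsLeast.csInf_eq ⟨⟨hg.jumpTime_nonneg n, ?_⟩, fun t ⟨ht, hV⟩ => ?_⟩
  · rw [ctPos, hg.nJumps_jumpTime]
    exact hn.1
  · exact (hg.strictMono_jumpTime.monotone (hn.2 hV)).trans (hg.jumpTime_nJumps_le ht)

lemma hitT_eq_toReal_tsum (hg : NonExplosive g) (h : ∃ n, ω n ∈ V) :
    hitT V (ω, g) =
      (∑' n, (avoidUpTo V n).indicator 1 ω * ENNReal.ofReal (g n)).toReal := by
  obtain ⟨n, hn⟩ : ∃ n, IsLeast {k | ω k ∈ V} n := ⟨_, Nat.isLeast_find h⟩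
  have hiff k : ω ∈ avoidUpTo V k ↔ k < n :=
    ⟨fun hk => not_le.1 fun hle => hk n hle hn.1, fun hk j hj hjV => (hn.2 hjV).not_gt (by omega)⟩
  have hout : ∀ k ∉ Finset.range n,
      (avoidUpTo V k).indicator 1 ω * ENNReal.ofReal (g k) = 0 := fun k hk => by
    rw [Set.indicator_of_notMem (by rwa [hiff, ← Finset.mem_range]), zero_mul]
  have hin : ∀ k ∈ Finset.range n,
      (avoidUpTo V k).indicator 1 ω * ENNReal.ofReal (g k) = ENNReal.ofReal (g k) := fun k hk => by
    rw [Set.indicator_of_mem (by rwa [hiff, ← Finset.mem_range]), Pi.one_apply, one_mul]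
  rw [hg.hitT_eq_jumpTime hn, tsum_eq_sum hout, Finset.sum_congr rfl hin,
    ← ENNReal.ofReal_sum_of_nonneg fun k _ => (hg.pos k).le]
  exact (ENNReal.toReal_ofReal (hg.jumpTime_nonneg n)).symm

lemma hitT_le_exitT_iff (hg : NonExplosive g) (hA : ∃ n, ω n ∈ A) (hB : ∃ n, ω n ∈ Bᶜ) :
    hitT A (ω, g) ≤ exitT B (ω, g) ↔ ω ∈ enterBefore A B := by
  obtain ⟨n, hn⟩ : ∃ n, IsLeast {k | ω k ∈ A} n := ⟨_, Nat.isLeast_find hA⟩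
  obtain ⟨m, hm⟩ : ∃ m, IsLeast {k | ω k ∈ Bᶜ} m := ⟨_, Nat.isLeast_find hB⟩
  have hexit : exitT B (ω, g) = jumpTime g m := hg.hitT_eq_jumpTime hm
  rw [hg.hitT_eq_jumpTime hn, hexit, hg.strictMono_jumpTime.le_iff_le]
  constructor
  · exact fun hnm => ⟨n, hn.1, fun k hk => not_not.1 fun hkB => (hm.2 hkB).not_gt (by omega)⟩
  · rintro ⟨l, hlA, hlB⟩
    exact (hn.2 hlA).trans (not_lt.1 fun hml => hm.1 (hlB m hml))

end NonExplosive

instance (n : ℕ) : DiscreteMeasurableSpace (ZMod n) := ⟨fun _ => trivial⟩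

variable {m : Measure (ℕ → Torus d N)} {ν : Measure (ℕ → ℝ)}

theorem measure_hitT_le_exitT [SFinite m] (hν : IsIIDExp ν) (hA : meanEntrance m A ≠ ∞)
    (hB : meanEntrance m Bᶜ ≠ ∞) :
    (m.prod ν) {ω | hitT A ω ≤ exitT B ω} = m (enterBefore A B) := by
  have := hν.1
  have hae : {ω : CTPath d N | hitT A ω ≤ exitT B ω} =ᵐ[m.prod ν]
      (enterBefore A B ×ˢ Set.univ : Set (CTPath d N)) := by
    refine eventuallyEq_set.2 ?_
    filter_upwards [Measure.quasiMeasurePreserving_fst.ae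
        (ae_exists_mem_of_meanEntrance_ne_top hA),
      Measure.quasiMeasurePreserving_fst.ae (ae_exists_mem_of_meanEntrance_ne_top hB),
      Measure.quasiMeasurePreserving_snd.ae hν.ae_nonExplosive] with ω hhit hexit hgap
    simpa using hgap.hitT_le_exitT_iff hhit hexit
  rw [measure_congr hae, Measure.prod_prod, measure_univ, mul_one]

variable [NeZero N]

lemma measurable_avoidUpTo_mul_gap (V : Set (Torus d N)) (n : ℕ) :
    Measurable fun ω : CTPath d N => (avoidUpTo V n).indicator 1 ω.1 * ENNReal.ofReal (ω.2 n) :=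
  ((measurable_one.indicator (measurableSet_avoidUpTo V n)).comp measurable_fst).mul
    ((measurable_pi_apply n).comp measurable_snd).ennreal_ofReal

lemma lintegral_tsum_avoidUpTo_mul_gap [SFinite m] (hν : IsIIDExp ν) :
    ∫⁻ ω, ∑' n, (avoidUpTo V n).indicator 1 ω.1 * ENNReal.ofReal (ω.2 n) ∂(m.prod ν) =
      meanEntrance m V := by
  have := hν.1
  rw [lintegral_tsum fun n => (measurable_avoidUpTo_mul_gap V n).aemeasurable]
  refine tsum_congr fun n => ?_
  have hgap := (measurable_pi_apply (X := fun _ : ℕ => ℝ) n).ennreal_ofReal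
  rw [lintegral_prod_mul (measurable_one.indicator (measurableSet_avoidUpTo V n)).aemeasurable
    hgap.aemeasurable, hν.lintegral_ofReal_apply, mul_one,
    lintegral_indicator_one (measurableSet_avoidUpTo V n)]

theorem integral_hitT [SFinite m] (hν : IsIIDExp ν) (hfin : meanEntrance m V ≠ ∞) :
    ∫ ω, hitT V ω ∂(m.prod ν) = (meanEntrance m V).toReal := by
  have := hν.1
  have hmeas : Measurable fun ω : CTPath d N =>
      ∑' n, (avoidUpTo V n).indicator 1 ω.1 * ENNReal.ofReal (ω.2 n) :=
    .tsum (measurable_avoidUpTo_mul_gap V)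
  have hmean := lintegral_tsum_avoidUpTo_mul_gap (m := m) (V := V) hν
  rw [← hmean, ← integral_toReal hmeas.aemeasurable (ae_lt_top hmeas (hmean ▸ hfin))]
  refine integral_congr_ae ?_
  filter_upwards [Measure.quasiMeasurePreserving_fst.ae
      (ae_exists_mem_of_meanEntrance_ne_top hfin),
    Measure.quasiMeasurePreserving_snd.ae hν.ae_nonExplosive] with ω hhit hgap
  exact hgap.hitT_eq_toReal_tsum hhit

end ContinuousTime

section Torus

variable {d : ℕ}

lemma adj_comm {R : Type*} [AddGroupWithOne R] {x y : Fin d → R} : adj x y ↔ adj y x := by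
  simp only [adj, ne_comm, or_comm, eq_comm]

lemma toReal_srwStep {R : Type*} [AddGroupWithOne R] (x y : Fin d → R) :
    (srwStep x y).toReal = if adj x y then (2 * d : ℝ)⁻¹ else 0 := by
  unfold srwStep
  split_ifs <;> simp

lemma transitionMatrix_srwStep_isSymm {R : Type*} [AddGroupWithOne R] :
    (transitionMatrix (srwStep : (Fin d → R) → (Fin d → R) → ℝ≥0∞)).IsSymm :=
  Matrix.IsSymm.ext fun x y => by
    simp only [transitionMatrix, Matrix.of_apply, toReal_srwStep, adj_comm (x := x)]

lemma transitionMatrix_srwStep_pos {R : Type*} [AddGroupWithOne R] {x y : Fin d → R}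
    (h : adj x y) : 0 < transitionMatrix srwStep x y := by
  have hd : (0 : ℝ) < d := Nat.cast_pos.2 (Fin.pos h.2.choose)
  rw [transitionMatrix, Matrix.of_apply, toReal_srwStep, if_pos h]
  positivity

variable {N : ℕ} [NeZero N]

lemma card_torus (d N : ℕ) [NeZero N] : (Fintype.card (Torus d N) : ℝ) = (N : ℝ) ^ d := by
  simp [Fintype.card_pi, ZMod.card]

lemma reflTransGen_adj (x y : Torus d N) : Relation.ReflTransGen adj x y := by
  let S : AddSubmonoid (Torus d N) :=
    { carrier := {z | ∀ x, Relation.ReflTransGen adj x (x + z)}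
      zero_mem' := fun x => by rw [add_zero]
      add_mem' := fun {a b} ha hb x => (ha x).trans (add_assoc x a b ▸ hb (x + a)) }
  have hsingle (i : Fin d) : Pi.single i 1 ∈ S := fun x => by
    by_cases hx : x = x + Pi.single i 1
    · rw [← hx]
    · exact .single ⟨hx, i, .inl (by simp), fun j hj => by simp [hj]⟩
  have hmem : y - x ∈ S := by
    rw [← Finset.univ_sum_single (y - x)]
    refine S.sum_mem fun i _ => ?_
    have : Pi.single i ((y - x) i) = ((y - x) i).val • (Pi.single i 1 : Torus d N) := by
      rw [← Pi.single_smul, nsmul_one, ZMod.natCast_zmod_val]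
    exact this ▸ S.nsmul_mem (hsingle i) _
  simpa using hmem x

lemma exists_reflTransGen_transitionMatrix_srwStep {A : Set (Torus d N)} (hA : A.Nonempty)
    (x : Torus d N) :
    ∃ a ∈ A, Relation.ReflTransGen (fun x y => 0 < transitionMatrix srwStep x y) x a :=
  hA.imp fun a ha => ⟨ha, (reflTransGen_adj x a).lift id fun _ _ => transitionMatrix_srwStep_pos⟩

lemma dirichlet_eq_dirichletForm_div_card
    (hP : transitionMatrix srwStep ∈ Matrix.rowStochastic ℝ (Torus d N)) (g : Torus d N → ℝ) :
    dirichlet d N g = dirichletForm (transitionMatrix srwStep) g g /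
      Fintype.card (Torus d N) := by
  rw [dirichletForm_self hP transitionMatrix_srwStep_isSymm, card_torus, dirichlet, mul_div_assoc]
  simp_rw [finsum_eq_sum_of_fintype, Finset.sum_div]
  refine congrArg _ (Finset.sum_congr rfl fun x _ => Finset.sum_congr rfl fun y _ => ?_)
  rw [transitionMatrix, Matrix.of_apply, toReal_srwStep]
  split_ifs
  · rw [inv_mul_eq_div, div_div]
  · rw [zero_mul, zero_div]

variable {μ : Torus d N → Measure (ℕ → Torus d N)} {m : Measure (ℕ → Torus d N)}
  {A : Set (Torus d N)}

lemma meanEntrance_srw_ne_top (hμ : IsMarkovFamily srwStep μ) (hA : A.Nonempty) (x : Torus d N) :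
    meanEntrance (μ x) A ≠ ∞ :=
  hμ.meanEntrance_ne_top (exists_reflTransGen_transitionMatrix_srwStep hA) x

lemma meanEntrance_unifInit (hμ : IsMarkovFamily srwStep μ)
    (hm : IsChainLaw srwStep (unifInit d N) m) (A : Set (Torus d N)) :
    meanEntrance m A = (∑ x, meanEntrance (μ x) A) / Fintype.card (Torus d N) := by
  rw [hμ.meanEntrance_eq_sum hm, ENNReal.div_eq_inv_mul, Finset.mul_sum]
  simp [unifInit, ZMod.card]

lemma integral_hitT_unifInit {ν : Measure (ℕ → ℝ)} (hμ : IsMarkovFamily srwStep μ)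
    (hm : IsChainLaw srwStep (unifInit d N) m) (hν : IsIIDExp ν) (hA : A.Nonempty) :
    ∫ ω, hitT A ω ∂(m.prod ν) =
      (∑ x, (meanEntrance (μ x) A).toReal) / Fintype.card (Torus d N) := by
  have := hm.1
  have hfin := meanEntrance_srw_ne_top hμ hA
  have hsum := meanEntrance_unifInit hμ hm A
  have htop : meanEntrance m A ≠ ∞ := hsum ▸ ENNReal.div_ne_top
    (ENNReal.sum_ne_top.2 fun x _ => hfin x) (Nat.cast_ne_zero.2 Fintype.card_ne_zero)
  rw [integral_hitT hν htop, hsum, ENNReal.toReal_div, ENNReal.toReal_sum fun x _ => hfin x,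
    ENNReal.toReal_natCast]

end Torus

theorem dirichlet_hitting_bounds_general
    (d N : ℕ) (hN : 1 ≤ N)
    (A₁ A₂ : Set (Torus d N)) (h12 : A₁ ⊆ A₂) (hne : A₁.Nonempty)
    (hproper : A₂ ≠ Set.univ)
    (Px : Torus d N → Measure (CTPath d N))
    (hPx : ∀ x, IsCTWalk (Px x) (pointInit x))
    (P : Measure (CTPath d N)) (hP : IsCTWalk P (unifInit d N)) :
    dirichlet d N (fun x => ((Px x) {ω | hitT A₁ ω ≤ exitT A₂ ω}).toReal) *
        (1 - 2 * sSup ((fun x : Torus d N =>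
            |1 - (∫ ω, hitT A₁ ω ∂(Px x)) / (∫ ω, hitT A₁ ω ∂P)|) '' A₂ᶜ)) ≤
      1 / (∫ ω, hitT A₁ ω ∂P) ∧
    1 / (∫ ω, hitT A₁ ω ∂P) ≤
      dirichlet d N (fun x => ((Px x) {ω | hitT A₁ ω ≤ exitT A₂ ω}).toReal) /
        ((A₂ᶜ.ncard : ℝ) / (N : ℝ) ^ d) ^ 2 := by
  have : NeZero N := ⟨Nat.one_le_iff_ne_zero.1 hN⟩
  choose μ ν hμ hν hprod using hPx
  obtain ⟨m, ξ, hm, hξ, rfl⟩ := hP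
  obtain rfl : Px = fun x => (μ x).prod (ν x) := funext hprod
  replace hμ : IsMarkovFamily srwStep μ := hμ
  have := hμ.isProbabilityMeasure
  have hfin := meanEntrance_srw_ne_top hμ hne
  have hh := hμ.isMeanHittingTime_toReal_meanEntrance hfin
  have hg := hμ.isEquilibriumPotential_toReal_enterBefore h12
  have hstoch := hμ.transitionMatrix_mem_rowStochastic
  have hpos := hh.sum_pos hstoch (fun h => hproper (Set.univ_subset_iff.1 (h ▸ h12)))
    fun _ => ENNReal.toReal_nonneg
  simp_rw [integral_hitT_unifInit hμ hm hξ hne, fun x => integral_hitT (hν x) (hfin x),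
    fun x => measure_hitT_le_exitT (hν x) (hfin x)
      (meanEntrance_srw_ne_top hμ (Set.nonempty_compl.2 hproper) x),
    dirichlet_eq_dirichletForm_div_card hstoch, ← card_torus]
  refine ⟨hh.dirichletForm_mul_le_one_div hstoch transitionMatrix_srwStep_isSymm hg
    (fun _ => ENNReal.toReal_nonneg) hpos fun x hx => (le_abs_self _).trans ?_,
    hh.one_div_le_dirichletForm_div hstoch transitionMatrix_srwStep_isSymm hg
      (fun _ => measureReal_le_one) hpos hproper⟩
  exact le_csSup (Set.toFinite _).bddAbove (Set.mem_image_of_mem _ hx)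

/-- **Proposition (Dirichlet form bounds on expected entrance times).**
For `A₁ ⊆ A₂ ⊊ T` with `A₁ ≠ ∅`, with `g(x) = P_x[H_{A₁} ≤ T_{A₂}]` and
`f_{A₁}(x) = 1 − E_x[H_{A₁}]/E[H_{A₁}]`:
`D(g,g)(1 − 2 sup_{x ∉ A₂} |f_{A₁}(x)|) ≤ 1/E[H_{A₁}] ≤ D(g,g)/π(T∖A₂)²`. -/
theorem dirichlet_hitting_bounds
    (d N : ℕ) (hd : 3 ≤ d) (hN : 1 ≤ N)
    (A₁ A₂ : Set (Torus d N)) (h12 : A₁ ⊆ A₂) (hne : A₁.Nonempty)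
    (hproper : A₂ ≠ Set.univ)
    (Px : Torus d N → Measure (CTPath d N))
    (hPx : ∀ x, IsCTWalk (Px x) (pointInit x))
    (P : Measure (CTPath d N)) (hP : IsCTWalk P (unifInit d N)) :
    dirichlet d N (fun x => ((Px x) {ω | hitT A₁ ω ≤ exitT A₂ ω}).toReal) *
        (1 - 2 * sSup ((fun x : Torus d N =>
            |1 - (∫ ω, hitT A₁ ω ∂(Px x)) / (∫ ω, hitT A₁ ω ∂P)|) '' A₂ᶜ)) ≤
      1 / (∫ ω, hitT A₁ ω ∂P) ∧
    1 / (∫ ω, hitT A₁ ω ∂P) ≤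
      dirichlet d N (fun x => ((Px x) {ω | hitT A₁ ω ≤ exitT A₂ ω}).toReal) /
        ((A₂ᶜ.ncard : ℝ) / (N : ℝ) ^ d) ^ 2 :=
  dirichlet_hitting_bounds_general d N hN A₁ A₂ h12 hne hproper Px hPx P hP

end Frag
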